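/- Let φ̃_H : ℝ → ℝ, φ̃_H(t) = 2·(log((|t| + √(4 + t²))/2))², and let W_H : SL(2) → ℝ be the planar incompressible Hencky energy, W_H(F) = 2·(log λ_max(F))² where λ_max(F) = (√(‖F‖² + 2) + √(‖F‖² − 2))/2. Then the convex envelope of φ̃_H is identically zero (i.e. every convex function p : ℝ → ℝ with p ≤ φ̃_H satisfies p ≤ 0, while 0 ≤ φ̃_H), and consequently RW_H(F) = CW_H(F) = 0 for all F ∈ SL(2). -/

import Mathlib

/-!
The energies grow like `log²`, hence sublinearly.  A convex function on a line that is bounded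
above by a sublinear function is constant (`le_of_sublinear`).

For the scalar function this gives `p t ≤ p 0 ≤ φ̃_H(0) = 0`.  For a rank-one convex `w ≤ W_H`,
apply it along the lines `s ↦ F * (1 + s E)` with `E` one of the two off-diagonal matrix units:
these stay in SL(2), have rank-one direction, and `W_H` grows like `log² |s|` along them.  So `w`
does not change under elementary column operations.  Such operations reduce every `F ∈ SL(2)` to
the identity, whence `w F ≤ w 1 ≤ W_H 1 = 0`.  A convex function is rank-one convex, so both
envelopes are at most `0`; the zero function is an admissible competitor for both.
-/

/-- The squared Frobenius norm of a real 2×2 matrix. -/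
noncomputable def frobSq (F : Matrix (Fin 2) (Fin 2) ℝ) : ℝ := ∑ i, ∑ j, (F i j) ^ 2

/-- Rank-one convexity of a function on SL(2). -/
def RankOneConvexOnSL2 (w : Matrix (Fin 2) (Fin 2) ℝ → ℝ) : Prop :=
  ∀ F H : Matrix (Fin 2) (Fin 2) ℝ, H.rank = 1 → F.det = 1 → (F + H).det = 1 →
    ∀ t ∈ Set.Icc (0 : ℝ) 1, w (F + t • H) ≤ (1 - t) * w F + t * w (F + H)

/-- The rank-one convex envelope of `W : SL(2) → ℝ`. -/
noncomputable def rankOneConvexEnvelopeSL2 (W : Matrix (Fin 2) (Fin 2) ℝ → ℝ)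
    (F : Matrix (Fin 2) (Fin 2) ℝ) : ℝ :=
  sSup {y : ℝ | ∃ w : Matrix (Fin 2) (Fin 2) ℝ → ℝ, RankOneConvexOnSL2 w ∧
    (∀ X : Matrix (Fin 2) (Fin 2) ℝ, X.det = 1 → w X ≤ W X) ∧ y = w F}

/-- The convex envelope of `W : SL(2) → ℝ` (convex minorants on `ℝ^{2×2}`,
constrained only on SL(2)). -/
noncomputable def convexEnvelopeSL2 (W : Matrix (Fin 2) (Fin 2) ℝ → ℝ)
    (F : Matrix (Fin 2) (Fin 2) ℝ) : ℝ :=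
  sSup {y : ℝ | ∃ w : Matrix (Fin 2) (Fin 2) ℝ → ℝ, ConvexOn ℝ Set.univ w ∧
    (∀ X : Matrix (Fin 2) (Fin 2) ℝ, X.det = 1 → w X ≤ W X) ∧ y = w F}

/-- The scalar representation of the planar incompressible Hencky energy,
`φ̃_H(t) = 2 log²((|t| + √(4 + t²))/2)`. -/
noncomputable def henckyPhi (t : ℝ) : ℝ :=
  2 * (Real.log ((|t| + Real.sqrt (4 + t ^ 2)) / 2)) ^ 2

/-- The planar incompressible Hencky energy `W_H(F) = 2 log²(λ_max(F))`, where
`λ_max(F) = (√(‖F‖² + 2) + √(‖F‖² − 2))/2`. -/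
noncomputable def henckyW (F : Matrix (Fin 2) (Fin 2) ℝ) : ℝ :=
  2 * (Real.log ((Real.sqrt (frobSq F + 2) + Real.sqrt (frobSq F - 2)) / 2)) ^ 2

/-- Here `b`, `a` and `q r` play the roles of `p 0`, `p t` and `p (r * t)` for a convex `p`, where
`q` grows sublinearly. -/
lemma le_of_sublinear {a b : ℝ} {q : ℝ → ℝ}
    (hc : ∀ r : ℝ, 1 ≤ r → a ≤ (1 - 1 / r) * b + (1 / r) * q r)
    (hq : ∀ ε : ℝ, 0 < ε → ∃ C : ℝ, ∀ r : ℝ, 1 ≤ r → q r ≤ ε * r + C) : a ≤ b := by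
  by_contra! hab
  obtain ⟨C, hC⟩ := hq ((a - b) / 2) (by linarith)
  have key : ∀ r : ℝ, 1 ≤ r → r * ((a - b) / 2) ≤ C - b := by
    intro r hr
    have h1 := hc r hr
    have h2 := hC r hr
    have hr0 : 0 < r := by linarith
    have h3 : r * a ≤ (r - 1) * b + q r := by
      calc r * a ≤ r * ((1 - 1 / r) * b + (1 / r) * q r) := by gcongr
        _ = (r - 1) * b + q r := by field_simp
    nlinarith
  have h4 := key (max 1 ((C - b + 1) / ((a - b) / 2))) (le_max_left _ _)
  have h5 : C - b + 1 ≤ max 1 ((C - b + 1) / ((a - b) / 2)) * ((a - b) / 2) := by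
    rw [← div_le_iff₀ (by linarith)]
    exact le_max_right _ _
  linarith

lemma two_mul_log_sq_le {ε x : ℝ} (hε : 0 < ε) (hx : 1 ≤ x) :
    2 * (Real.log x) ^ 2 ≤ ε * x + 256 / ε := by
  -- with `x = y ^ 4` one has `log x = 4 * log y ≤ 4 * y`, so `log² x ≤ 16 * √x`
  set y := √(√x) with hy
  have hy0 : 0 ≤ y := Real.sqrt_nonneg _
  have hy2 : y ^ 2 = √x := Real.sq_sqrt (Real.sqrt_nonneg _)
  have hy4 : x = y ^ 4 := by
    have h : (√x) ^ 2 = x := Real.sq_sqrt (by linarith)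
    rw [← hy2] at h
    linarith [show (y ^ 2) ^ 2 = y ^ 4 by ring]
  have hlog : Real.log x = 4 * Real.log y := by
    rw [hy4, Real.log_pow]; norm_num
  have h0 : 0 ≤ Real.log x := Real.log_nonneg hx
  have h1 : Real.log y ≤ y := Real.log_le_self hy0
  have h2 : (Real.log x) ^ 2 ≤ 16 * y ^ 2 := by nlinarith
  have h3 : 32 * y ^ 2 ≤ ε * x + 256 / ε := by
    have h4 : ε * x + 256 / ε - 32 * y ^ 2 = (ε * y ^ 2 - 16) ^ 2 / ε := by
      rw [hy4]; field_simp; ring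
    have h5 : 0 ≤ (ε * y ^ 2 - 16) ^ 2 / ε := by positivity
    linarith
  linarith

lemma henckyPhi_le {ε : ℝ} (hε : 0 < ε) (t : ℝ) :
    henckyPhi t ≤ ε * (|t| + 1) + 256 / ε := by
  have hs : √(4 + t ^ 2) ≤ |t| + 2 := by
    rw [Real.sqrt_le_left (by positivity)]
    nlinarith [abs_nonneg t, sq_abs t]
  have hs2 : 2 ≤ √(4 + t ^ 2) := Real.le_sqrt_of_sq_le (by nlinarith [sq_nonneg t])
  have h := two_mul_log_sq_le hε (x := (|t| + √(4 + t ^ 2)) / 2) (by linarith [abs_nonneg t])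
  unfold henckyPhi
  have : ε * ((|t| + √(4 + t ^ 2)) / 2) ≤ ε * (|t| + 1) := by gcongr; linarith
  linarith

lemma henckyPhi_zero : henckyPhi 0 = 0 := by
  have : √(4 : ℝ) = 2 := by
    rw [show (4 : ℝ) = 2 ^ 2 by norm_num]; exact Real.sqrt_sq (by norm_num)
  simp [henckyPhi, this]

/-- The entrywise `ℓ¹` norm of a 2×2 matrix. -/
def entrySum (X : Matrix (Fin 2) (Fin 2) ℝ) : ℝ := |X 0 0| + |X 0 1| + |X 1 0| + |X 1 1|

lemma henckyW_le {ε : ℝ} (hε : 0 < ε) (X : Matrix (Fin 2) (Fin 2) ℝ) (hX : X.det = 1) :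
    henckyW X ≤ ε * (entrySum X + 2) + 256 / ε := by
  have hf : frobSq X = X 0 0 ^ 2 + X 0 1 ^ 2 + X 1 0 ^ 2 + X 1 1 ^ 2 := by
    simp [frobSq, Fin.sum_univ_two]; ring
  rw [Matrix.det_fin_two] at hX
  have hf2 : 2 ≤ frobSq X := by
    rw [hf]
    nlinarith [sq_nonneg (X 0 0 - X 1 1), sq_nonneg (X 0 1 + X 1 0)]
  have he : 0 ≤ entrySum X := by unfold entrySum; positivity
  have hfe : frobSq X ≤ entrySum X ^ 2 := by
    rw [hf, entrySum, ← sq_abs (X 0 0), ← sq_abs (X 0 1), ← sq_abs (X 1 0), ← sq_abs (X 1 1)]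
    have h0 := abs_nonneg (X 0 0)
    have h1 := abs_nonneg (X 0 1)
    have h2 := abs_nonneg (X 1 0)
    have h3 := abs_nonneg (X 1 1)
    nlinarith [mul_nonneg h0 h1, mul_nonneg h0 h2, mul_nonneg h0 h3, mul_nonneg h1 h2,
      mul_nonneg h1 h3, mul_nonneg h2 h3]
  have hs : √(frobSq X + 2) ≤ entrySum X + 2 := by
    rw [Real.sqrt_le_left (by positivity)]
    nlinarith
  have hs' : √(frobSq X - 2) ≤ √(frobSq X + 2) := Real.sqrt_le_sqrt (by linarith)
  have hs2 : 2 ≤ √(frobSq X + 2) := Real.le_sqrt_of_sq_le (by linarith)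
  have h := two_mul_log_sq_le hε (x := (√(frobSq X + 2) + √(frobSq X - 2)) / 2)
    (by linarith [Real.sqrt_nonneg (frobSq X - 2)])
  unfold henckyW
  have : ε * ((√(frobSq X + 2) + √(frobSq X - 2)) / 2) ≤ ε * (entrySum X + 2) := by
    gcongr; linarith
  linarith

lemma henckyW_nonneg (X : Matrix (Fin 2) (Fin 2) ℝ) : 0 ≤ henckyW X := by
  unfold henckyW; positivity

lemma henckyW_one : henckyW 1 = 0 := by
  have : √(4 : ℝ) = 2 := by
    rw [show (4 : ℝ) = 2 ^ 2 by norm_num]; exact Real.sqrt_sq (by norm_num)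
  have hf : frobSq 1 = 2 := by
    simp [frobSq, Fin.sum_univ_two]; norm_num
  rw [henckyW, hf]
  norm_num [this]

lemma entrySum_add_smul_le (F H : Matrix (Fin 2) (Fin 2) ℝ) {r : ℝ} (hr : 0 ≤ r) :
    entrySum (F + r • H) ≤ entrySum F + r * entrySum H := by
  have h : ∀ i j, |(F + r • H) i j| ≤ |F i j| + r * |H i j| := by
    intro i j
    have := abs_add_le (F i j) (r * H i j)
    rwa [abs_mul, abs_of_nonneg hr] at this
  unfold entrySum
  linarith [h 0 0, h 0 1, h 1 0, h 1 1]

/-- A rank-one convex minorant of the Hencky energy cannot increase along a rank-one ray that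
stays in SL(2). -/
lemma le_along_ray {w : Matrix (Fin 2) (Fin 2) ℝ → ℝ} (hw : RankOneConvexOnSL2 w)
    (hle : ∀ X : Matrix (Fin 2) (Fin 2) ℝ, X.det = 1 → w X ≤ henckyW X)
    (F H : Matrix (Fin 2) (Fin 2) ℝ) (hH : H.rank = 1)
    (hdet : ∀ r : ℝ, (F + r • H).det = 1) : w (F + H) ≤ w F := by
  refine le_of_sublinear (q := fun r => w (F + r • H)) ?_ ?_
  · intro r hr
    have hr0 : r ≠ 0 := by positivity
    have hrk : (r • H).rank = 1 := by
      rw [Matrix.rank_smul_of_mem_nonZeroDivisors H (mem_nonZeroDivisors_of_ne_zero hr0), hH]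
    have h := hw F (r • H) hrk (by simpa using hdet 0) (hdet r) (1 / r)
      ⟨by positivity, by rw [div_le_one (by positivity)]; exact hr⟩
    rwa [smul_smul, one_div_mul_cancel hr0, one_smul] at h
  · intro ε hε
    have he : 0 ≤ entrySum H := by unfold entrySum; positivity
    set δ := ε / (entrySum H + 1) with hδ
    have hδ0 : 0 < δ := by positivity
    have hδε : δ * entrySum H ≤ ε := by
      have : δ * (entrySum H + 1) = ε := by rw [hδ]; field_simp
      linarith
    refine ⟨δ * (entrySum F + 2) + 256 / δ, fun r hr => ?_⟩
    have h1 := hle _ (hdet r)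
    have h2 := henckyW_le hδ0 _ (hdet r)
    have h3 := mul_le_mul_of_nonneg_left (entrySum_add_smul_le F H (by linarith : 0 ≤ r)) hδ0.le
    have h4 := mul_le_mul_of_nonneg_right hδε (by linarith : 0 ≤ r)
    show w (F + r • H) ≤ _
    linarith

lemma rank_eq_one_of_vecMulVec {u v : Fin 2 → ℝ} (h : Matrix.vecMulVec u v ≠ 0) :
    (Matrix.vecMulVec u v).rank = 1 := by
  refine le_antisymm (Matrix.rank_vecMulVec_le _ _) ?_
  rw [Nat.one_le_iff_ne_zero]
  intro h0
  rw [Matrix.rank, Submodule.finrank_eq_zero, LinearMap.range_eq_bot] at h0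
  refine h (Matrix.toLin'.injective ?_)
  rw [Matrix.toLin'_apply', h0, map_zero]

/-- `w` does not decrease when `s` times the second column is added to the first. -/
lemma le_addCol_first {w : Matrix (Fin 2) (Fin 2) ℝ → ℝ} (hw : RankOneConvexOnSL2 w)
    (hle : ∀ X : Matrix (Fin 2) (Fin 2) ℝ, X.det = 1 → w X ≤ henckyW X)
    {a b c d : ℝ} (hd : a * d - b * c = 1) (s : ℝ) :
    w !![a, b; c, d] ≤ w !![a + s * b, b; c + s * d, d] := by
  by_cases hs : s = 0
  · simp [hs]
  have hE : Matrix.vecMulVec ![-s * b, -s * d] ![1, 0] = !![-s * b, 0; -s * d, 0] := by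
    ext i j; fin_cases i <;> fin_cases j <;> simp [Matrix.vecMulVec_apply]
  have h := le_along_ray hw hle !![a + s * b, b; c + s * d, d]
    (Matrix.vecMulVec ![-s * b, -s * d] ![1, 0]) (rank_eq_one_of_vecMulVec ?_) ?_
  · rw [hE] at h
    convert h using 2
    ext i j; fin_cases i <;> fin_cases j <;> simp
  · intro h0
    rw [hE] at h0
    have h1 := congrFun (congrFun h0 0) 0
    have h2 := congrFun (congrFun h0 1) 0
    have hb : b = 0 := by simpa [hs] using h1
    have hd' : d = 0 := by simpa [hs] using h2
    rw [hb, hd'] at hd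
    norm_num at hd
  · intro r
    rw [hE, Matrix.det_fin_two]
    simp
    linarith

/-- `w` does not decrease when `s` times the first column is added to the second. -/
lemma le_addCol_second {w : Matrix (Fin 2) (Fin 2) ℝ → ℝ} (hw : RankOneConvexOnSL2 w)
    (hle : ∀ X : Matrix (Fin 2) (Fin 2) ℝ, X.det = 1 → w X ≤ henckyW X)
    {a b c d : ℝ} (hd : a * d - b * c = 1) (s : ℝ) :
    w !![a, b; c, d] ≤ w !![a, b + s * a; c, d + s * c] := by
  by_cases hs : s = 0
  · simp [hs]
  have hE : Matrix.vecMulVec ![-s * a, -s * c] ![0, 1] = !![0, -s * a; 0, -s * c] := by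
    ext i j; fin_cases i <;> fin_cases j <;> simp [Matrix.vecMulVec_apply]
  have h := le_along_ray hw hle !![a, b + s * a; c, d + s * c]
    (Matrix.vecMulVec ![-s * a, -s * c] ![0, 1]) (rank_eq_one_of_vecMulVec ?_) ?_
  · rw [hE] at h
    convert h using 2
    ext i j; fin_cases i <;> fin_cases j <;> simp
  · intro h0
    rw [hE] at h0
    have h1 := congrFun (congrFun h0 0) 1
    have h2 := congrFun (congrFun h0 1) 1
    have ha : a = 0 := by simpa [hs] using h1
    have hc' : c = 0 := by simpa [hs] using h2
    rw [ha, hc'] at hd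
    norm_num at hd
  · intro r
    rw [hE, Matrix.det_fin_two]
    simp
    linarith

/-- Column reduction to the identity when the upper right entry does not vanish. -/
lemma le_one_of_ne {w : Matrix (Fin 2) (Fin 2) ℝ → ℝ} (hw : RankOneConvexOnSL2 w)
    (hle : ∀ X : Matrix (Fin 2) (Fin 2) ℝ, X.det = 1 → w X ≤ henckyW X)
    {a b c d : ℝ} (hd : a * d - b * c = 1) (hb : b ≠ 0) :
    w !![a, b; c, d] ≤ w 1 := by
  -- the multiplier `s` turns the upper left entry into `1`
  set s := (1 - a) / b with hs
  have hsb : a + s * b = 1 := by rw [hs]; field_simp; ring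
  have h1 := le_addCol_first hw hle hd s
  rw [hsb] at h1
  set e := c + s * d with he
  have hd1 : d - b * e = 1 := by
    rw [he]; linear_combination hd - d * hsb
  have h2 := le_addCol_second hw hle (a := 1) (b := b) (c := e) (d := d) (by linarith) (-b)
  rw [show b + -b * 1 = 0 by ring, show d + -b * e = 1 by linarith] at h2
  have h3 := le_addCol_first hw hle (a := 1) (b := 0) (c := e) (d := 1) (by ring) (-e)
  rw [show (1 : ℝ) + -e * 0 = 1 by ring, show e + -e * 1 = 0 by ring,
    ← Matrix.one_fin_two] at h3
  exact h1.trans (h2.trans h3)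

lemma nonpos_of_rankOneConvex {w : Matrix (Fin 2) (Fin 2) ℝ → ℝ} (hw : RankOneConvexOnSL2 w)
    (hle : ∀ X : Matrix (Fin 2) (Fin 2) ℝ, X.det = 1 → w X ≤ henckyW X)
    {F : Matrix (Fin 2) (Fin 2) ℝ} (hF : F.det = 1) : w F ≤ 0 := by
  have h1 : w 1 ≤ 0 := henckyW_one ▸ hle 1 Matrix.det_one
  refine le_trans ?_ h1
  rw [Matrix.det_fin_two] at hF
  rw [Matrix.eta_fin_two F]
  by_cases hb : F 0 1 = 0
  · have ha : F 0 0 ≠ 0 := by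
      intro ha
      rw [ha, hb] at hF
      norm_num at hF
    refine (le_addCol_second hw hle hF 1).trans (le_one_of_ne hw hle ?_ ?_)
    · linarith
    · simpa [hb] using ha
  · exact le_one_of_ne hw hle hF hb

lemma ConvexOn.rankOneConvexOnSL2 {w : Matrix (Fin 2) (Fin 2) ℝ → ℝ}
    (hw : ConvexOn ℝ Set.univ w) : RankOneConvexOnSL2 w := by
  intro F H _ _ _ t ht
  have h := hw.2 (Set.mem_univ F) (Set.mem_univ (F + H)) (sub_nonneg.2 ht.2) ht.1 (by ring)
  have e : (1 - t) • F + t • (F + H) = F + t • H := by module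
  rw [e] at h
  simpa using h

/-- The convex envelope of the scalar Hencky representation `φ̃_H` is identically zero,
and consequently the rank-one convex and convex envelopes of the planar incompressible
Hencky energy vanish on SL(2). -/
theorem hencky_relaxation :
    (∀ p : ℝ → ℝ, ConvexOn ℝ Set.univ p → (∀ t : ℝ, p t ≤ henckyPhi t) →
      ∀ t : ℝ, p t ≤ 0) ∧
    (∀ t : ℝ, 0 ≤ henckyPhi t) ∧
    (∀ F : Matrix (Fin 2) (Fin 2) ℝ, F.det = 1 →
      rankOneConvexEnvelopeSL2 henckyW F = 0 ∧ convexEnvelopeSL2 henckyW F = 0) := by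
  refine ⟨fun p hp hle t => ?_, fun t => ?_, fun F hF => ⟨?_, ?_⟩⟩
  · refine le_trans ?_ (henckyPhi_zero ▸ hle 0)
    refine le_of_sublinear (q := fun r => p (r * t)) (fun r hr => ?_) (fun ε hε => ?_)
    · have hr0 : r ≠ 0 := by positivity
      have hr1 : 1 / r ≤ 1 := by rw [div_le_one (by positivity)]; exact hr
      have h := hp.2 (Set.mem_univ 0) (Set.mem_univ (r * t)) (sub_nonneg.2 hr1)
        (by positivity : 0 ≤ 1 / r) (by ring)
      have e : (1 - 1 / r) • (0 : ℝ) + (1 / r) • (r * t) = t := by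
        simp only [smul_eq_mul]; field_simp; simp
      rw [e] at h
      simpa only [smul_eq_mul] using h
    · set δ := ε / (|t| + 1) with hδ
      have hδ0 : 0 < δ := by positivity
      have hδε : δ * |t| ≤ ε := by
        have : δ * (|t| + 1) = ε := by rw [hδ]; field_simp
        linarith
      refine ⟨δ + 256 / δ, fun r hr => ?_⟩
      have h1 := (hle (r * t)).trans (henckyPhi_le hδ0 (r * t))
      rw [abs_mul, abs_of_nonneg (by linarith : 0 ≤ r)] at h1
      have h2 := mul_le_mul_of_nonneg_right hδε (by linarith : 0 ≤ r)
      show p (r * t) ≤ _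
      linarith
  · unfold henckyPhi; positivity
  · refine IsGreatest.csSup_eq ⟨⟨fun _ => 0, ?_, fun X _ => henckyW_nonneg X, rfl⟩, ?_⟩
    · intro _ _ _ _ _ _ _; simp
    · rintro y ⟨w, hw, hle, rfl⟩
      exact nonpos_of_rankOneConvex hw hle hF
  · refine IsGreatest.csSup_eq ⟨⟨fun _ => 0, convexOn_const 0 convex_univ,
      fun X _ => henckyW_nonneg X, rfl⟩, ?_⟩
    rintro y ⟨w, hw, hle, rfl⟩
    exact nonpos_of_rankOneConvex hw.rankOneConvexOnSL2 hle hF
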